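/- Let X = Spec(B) be given by a local presentation attached to the multiplicity as in the context, with elimination algebra G_X^{(d)} over S. Let ψ̄ : S → K[[t]] be a diagonal arc, i.e. a k-algebra homomorphism with ψ̄(z_j) = u_j t^α for units u_j ∈ K[[t]] and a positive integer α, which is diagonal-generic for G_X^{(d)}, i.e. ord(ψ̄(G_X^{(d)})) = α · ord(G_X^{(d)}). Then there exist a field extension K′ of k and a nonzero k-algebra homomorphism φ : B → K′[[t]] sending the maximal ideal of B into (t) whose restriction φ^{(d)} to S satisfies ker(φ^{(d)}) = ker(ψ̄); moreover φ^{(d)} is again a diagonal arc (φ^{(d)}(z_j) = u_j g′(t) for a common g′ ∈ K′[[t]] of positive order) and is diagonal-generic for G_X^{(d)}, i.e. ord(φ^{(d)}(G_X^{(d)})) = ord(φ^{(d)}) · ord(G_X^{(d)}). -/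

import Mathlib

open Polynomial
open scoped ENNReal

noncomputable section

namespace NashMult

/-- The `m`-adic order `ν(f)` of an element `f` of a ring: the largest `n` with `f ∈ m ^ n`. -/
def adicOrder {R : Type*} [CommRing R] (m : Ideal R) (f : R) : ℕ :=
  sSup {n : ℕ | f ∈ m ^ n}

/-- A subalgebra `G ⊆ R[W]` is *graded* if it is spanned by its "monomials", i.e. it is closed
under taking homogeneous components.  This is the condition expressing that `G = ⊕ I_l W^l`
for a family of ideals `I_l` (with `I_0 = R` and `I_i · I_j ⊆ I_{i+j}` automatic). -/
def Graded {R : Type*} [CommRing R] (G : Subalgebra R (Polynomial R)) : Prop :=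
  ∀ p ∈ G, ∀ n : ℕ, (C (p.coeff n) * X ^ n : Polynomial R) ∈ G

/-- A *Rees algebra* over `R`: a finitely generated graded subalgebra of `R[W]`. -/
def IsReesAlgebra {R : Type*} [CommRing R] (G : Subalgebra R (Polynomial R)) : Prop :=
  G.FG ∧ Graded G

/-- The order of (the Rees algebra) `G` at the closed point of the local ring `(R, m)`:
`ord(G) = inf { ν(f)/n : f W^n a homogeneous element of G, n ≥ 1, f ≠ 0 }`
(with value `∞` for the empty infimum). -/
def reesOrder {R : Type*} [CommRing R] (m : Ideal R) (G : Subalgebra R (Polynomial R)) : ℝ≥0∞ :=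
  sInf {q : ℝ≥0∞ | ∃ (f : R) (n : ℕ), f ≠ 0 ∧ 1 ≤ n ∧ (C f * X ^ n : Polynomial R) ∈ G ∧
    q = (adicOrder m f : ℝ≥0∞) / (n : ℝ≥0∞)}

/-- `G = ⊕ I_l W^l` is *differentially closed* relative to a family `D` of derivations if
`I_{l+1} ⊆ I_l` and `D_j (I_l) ⊆ I_{l-1}` for all `l ≥ 1` and all `j`. -/
def DiffClosed {k R ι : Type*} [CommRing k] [CommRing R] [Algebra k R]
    (D : ι → Derivation k R R) (G : Subalgebra R (Polynomial R)) : Prop :=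
  (∀ (f : R) (l : ℕ), 1 ≤ l → (C f * X ^ (l + 1) : Polynomial R) ∈ G →
      (C f * X ^ l : Polynomial R) ∈ G) ∧
  (∀ (f : R) (l : ℕ) (j : ι), (C f * X ^ (l + 1) : Polynomial R) ∈ G →
      (C (D j f) * X ^ l : Polynomial R) ∈ G)

/-- `Diff(M)`: the smallest graded differentially closed subalgebra of `R[W]` containing the
set `M`. -/
def diffClosure {k R ι : Type*} [CommRing k] [CommRing R] [Algebra k R]
    (D : ι → Derivation k R R) (M : Set (Polynomial R)) : Subalgebra R (Polynomial R) :=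
  sInf {G : Subalgebra R (Polynomial R) | M ⊆ ↑G ∧ Graded G ∧ DiffClosed D G}

/-- The image `ψ(G)` of a Rees algebra `G` over `R` under a homomorphism (arc) `ψ : R → K⟦t⟧`:
the Rees algebra over `K⟦t⟧` generated by all `ψ(g) W^l` for `g W^l` a homogeneous element of
`G` with `ψ(g) ≠ 0`. -/
def arcImage {R A : Type*} [CommRing R] [CommRing A] (ψ : R → A)
    (G : Subalgebra R (Polynomial R)) : Subalgebra A (Polynomial A) :=
  Algebra.adjoin A {p : Polynomial A | ∃ (g : R) (l : ℕ),
    (C g * X ^ l : Polynomial R) ∈ G ∧ ψ g ≠ 0 ∧ p = C (ψ g) * X ^ l}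

/-- The order `ord(ψ)` of an arc `ψ : R → K⟦t⟧`: the largest `n` such that
`ψ(m) ⊆ t^n` (`t` being the ideal `tI`). -/
def homOrd {R A : Type*} [CommRing R] [CommRing A] (m : Ideal R) (tI : Ideal A)
    (ψ : R → A) : ℕ :=
  sSup {n : ℕ | ∀ s ∈ m, ψ s ∈ tI ^ n}

/-- The maximal ideal `(t)` of `K⟦t⟧`. -/
def tId (K : Type*) [CommRing K] : Ideal (PowerSeries K) :=
  Ideal.span {(PowerSeries.X : PowerSeries K)}

/-- The `t`-adic order on `K⟦t⟧`. -/
def tOrd {K : Type*} [CommRing K] (g : PowerSeries K) : ℕ :=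
  adicOrder (tId K) g

/-- The family of ideals `I_l` of the graded algebra `G = ⊕ I_l W^l`. -/
def idealFam {R : Type*} [CommRing R] (G : Subalgebra R (Polynomial R)) (l : ℕ) : Ideal R :=
  Submodule.comap (Polynomial.monomial l : R →ₗ[R] Polynomial R) (Subalgebra.toSubmodule G)

/-- The closed point of the local ring `(R, m)` belongs to the singular locus of
`G = ⊕ I_l W^l`, i.e. `ν(I_l) ≥ l` for all `l ≥ 1`. -/
def SingFam {R : Type*} [CommRing R] (m : Ideal R) (I : ℕ → Ideal R) : Prop :=
  ∀ l : ℕ, 1 ≤ l → I l ≤ m ^ l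

/-- The transform `⊕ (I_l · T^{-l}) W^l` of a Rees algebra `⊕ I_l W^l` over a DVR with
uniformizer `T` (when the closed point lies in the singular locus, `I_l ⊆ (T^l)` and
`I_l · T^{-l} = (I_l : (T^l))`). -/
def transformFam {R : Type*} [CommRing R] (T : R) (I : ℕ → Ideal R) : ℕ → Ideal R :=
  fun l => (I l).colon (Ideal.span {T ^ l})

/-- The persistance: the least number `κ` of transforms needed so that the closed point no
longer lies in the singular locus. -/
def persist {R : Type*} [CommRing R] (m : Ideal R) (T : R)
    (G : Subalgebra R (Polynomial R)) : ℕ :=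
  sInf {κ : ℕ | ¬ SingFam m ((transformFam T)^[κ] (idealFam G))}

/-- The set of elements of a ring integral over a subset `s` (monic equation with
coefficients in `s`). -/
def intClos {A : Type*} [CommRing A] (s : Set A) : Set A :=
  {p : A | ∃ q : Polynomial A, q.Monic ∧ (∀ n, q.coeff n ∈ s) ∧ Polynomial.eval p q = 0}


/-- The monic polynomial `f = x^b + B_{b-2} x^{b-2} + ⋯ + B_1 x + B_0` with coefficients
`B_j = Bc j` (only `j ≤ b - 2` is relevant). -/
def minPolyOf {S : Type*} [CommRing S] (b : ℕ) (Bc : ℕ → S) : Polynomial S :=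
  Polynomial.X ^ b + ∑ j ∈ Finset.range (b - 1), Polynomial.C (Bc j) * Polynomial.X ^ j


/-- The maximal ideal `(z_1, …, z_d)` of the polynomial ring `k[z_1, …, z_d]`
(the kernel of evaluation at the origin). -/
def mPoly (k : Type) [Field k] (d : ℕ) : Ideal (MvPolynomial (Fin d) k) :=
  RingHom.ker (MvPolynomial.aeval (fun _ => (0 : k)) : MvPolynomial (Fin d) k →ₐ[k] k)

instance {k : Type} [Field k] {d : ℕ} : (mPoly k d).IsMaximal :=
  RingHom.ker_isMaximal_of_surjective _ (fun a => ⟨MvPolynomial.C a, by simp⟩)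

instance {k : Type} [Field k] {d : ℕ} : (mPoly k d).IsPrime :=
  (inferInstance : (mPoly k d).IsMaximal).isPrime

/-- `IsSLoc k d S` says that `S` is (identified with) the localization of `k[z_1, …, z_d]`
at the maximal ideal `(z_1, …, z_d)`. -/
abbrev IsSLoc (k : Type) [Field k] (d : ℕ) (S : Type) [CommRing S]
    [Algebra (MvPolynomial (Fin d) k) S] : Prop :=
  IsLocalization.AtPrime S (mPoly k d)

/-- The element `z_j` of `S`. -/
def zvar (k : Type) [Field k] (d : ℕ) (S : Type) [CommRing S]
    [Algebra (MvPolynomial (Fin d) k) S] (j : Fin d) : S :=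
  algebraMap (MvPolynomial (Fin d) k) S (MvPolynomial.X j)

/-- The maximal ideal `m = (z_1, …, z_d)` of the local ring `S`. -/
def mS (k : Type) [Field k] (d : ℕ) (S : Type) [CommRing S]
    [Algebra (MvPolynomial (Fin d) k) S] : Ideal S :=
  (mPoly k d).map (algebraMap (MvPolynomial (Fin d) k) S)


variable (k : Type) [Field k] (d : ℕ)
variable (S : Type) [CommRing S] [Algebra (MvPolynomial (Fin d) k) S] [Algebra k S]

/-- A local presentation, attached to the multiplicity, of a `d`-dimensional variety
`X = Spec B` at the closed point `ξ`:  `B = S[x_1,…,x_{n-d}]/I` with `I` prime,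
`S → B` injective and finite, and the minimal polynomial over `Frac S` of the class `θ_i`
of `x_i` is `f_i = x_i^{b_i} + B_{i,b_i-2} x_i^{b_i-2} + ⋯ + B_{i,0}` with `b_i ≥ 2`,
`B_{i,j} ∈ m^{b_i - j}`, and some `B_{i,j} ≠ 0`. -/
structure Presentation [IsDomain S] : Type 1 where
  /-- the number `n - d ≥ 1` of extra variables `x_i` -/
  e : ℕ
  he : 1 ≤ e
  /-- the prime ideal `I ⊆ S[x_1,…,x_{n-d}]` defining `X` -/
  I : Ideal (MvPolynomial (Fin e) S)
  hprime : I.IsPrime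
  hinj : Function.Injective (algebraMap S (MvPolynomial (Fin e) S ⧸ I))
  hfinite : Module.Finite S (MvPolynomial (Fin e) S ⧸ I)
  /-- the degrees `b_i ≥ 2` -/
  b : Fin e → ℕ
  hb : ∀ i, 2 ≤ b i
  /-- the coefficients `B_{i,j}` (only `j ≤ b_i - 2` is relevant) -/
  Bc : Fin e → ℕ → S
  /-- `f_i(θ_i) = 0` -/
  hroot : ∀ i, Polynomial.aeval (Ideal.Quotient.mk I (MvPolynomial.X i))
    (minPolyOf (b i) (Bc i)) = 0
  /-- `f_i` is irreducible over `Frac S`, i.e. it is the minimal polynomial of `θ_i` -/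
  hirr : ∀ i, Irreducible ((minPolyOf (b i) (Bc i)).map (algebraMap S (FractionRing S)))
  /-- `B_{i,j} ∈ m^{b_i - j}` -/
  hmem : ∀ i, ∀ j ≤ b i - 2, Bc i j ∈ (mS k d S) ^ (b i - j)
  /-- some `B_{i,j} ≠ 0` -/
  hnz : ∃ i, ∃ j ≤ b i - 2, Bc i j ≠ 0

variable [IsDomain S]
variable {k d S}

/-- The coordinate ring `B = S[x_1,…,x_{n-d}]/I` of `X`. -/
abbrev BRing (P : Presentation k d S) : Type :=
  MvPolynomial (Fin P.e) S ⧸ P.I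

/-- The class `θ_i` of `x_i` in `B`. -/
def theta (P : Presentation k d S) (i : Fin P.e) : BRing P :=
  Ideal.Quotient.mk P.I (MvPolynomial.X i)

/-- The elimination algebra in dimension `d`:
`G_X^{(d)} = Diff( S[ B_{i,j} W^{b_i - j} : i, j ] )`, a Rees algebra over `S`. -/
def elimAlg (P : Presentation k d S) (D : Fin d → Derivation k S S) :
    Subalgebra S (Polynomial S) :=
  diffClosure D {p : Polynomial S | ∃ i, ∃ j ≤ P.b i - 2,
    p = Polynomial.C (P.Bc i j) * Polynomial.X ^ (P.b i - j)}

/-- An arc in `X` through `ξ` (with the required nonvanishing): a `k`-algebra homomorphism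
`φ : B → K⟦t⟧` sending the maximal ideal of `B` at `ξ` into `(t)`, with all `φ(θ_i)` and
`φ(z_j)` nonzero. -/
def IsArc (P : Presentation k d S) {K : Type} [Field K] [Algebra k K]
    (φ : BRing P →ₐ[k] PowerSeries K) : Prop :=
  (∀ s ∈ mS k d S, φ (algebraMap S (BRing P) s) ∈ tId K) ∧
  (∀ i, φ (theta P i) ∈ tId K) ∧
  (∀ i, φ (theta P i) ≠ 0) ∧
  (∀ j, φ (algebraMap S (BRing P) (zvar k d S j)) ≠ 0)

/-- The order of an arc: the minimum of the `t`-adic orders of the `φ(θ_i)` and the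
`φ(z_j)`. -/
def arcOrd (P : Presentation k d S) {K : Type} [Field K] [Algebra k K]
    (φ : BRing P →ₐ[k] PowerSeries K) : ℕ :=
  sInf ((Set.range fun i => tOrd (φ (theta P i))) ∪
    (Set.range fun j => tOrd (φ (algebraMap S (BRing P) (zvar k d S j)))))

/-- The contact algebra `G^{(1)}_{X_0,φ}`: the Rees algebra over `K⟦t⟧` generated by the
`φ(θ_i) W` together with all `φ(g) W^l` for `g W^l` a homogeneous element of `G_X^{(d)}`
with `φ(g) ≠ 0`. -/
def contactAlg (P : Presentation k d S) (D : Fin d → Derivation k S S)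
    {K : Type} [Field K] [Algebra k K] (φ : BRing P →ₐ[k] PowerSeries K) :
    Subalgebra (PowerSeries K) (Polynomial (PowerSeries K)) :=
  Algebra.adjoin (PowerSeries K)
    ((Set.range fun i => (Polynomial.C (φ (theta P i)) * Polynomial.X :
        Polynomial (PowerSeries K))) ∪
      {p : Polynomial (PowerSeries K) | ∃ (g : S) (l : ℕ),
        (Polynomial.C g * Polynomial.X ^ l : Polynomial S) ∈ elimAlg P D ∧
        φ (algebraMap S (BRing P) g) ≠ 0 ∧
        p = Polynomial.C (φ (algebraMap S (BRing P) g)) * Polynomial.X ^ l})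

/-- The order of contact `r_{X,φ}` of the arc `φ` with `Max mult(X)`: the order of the
contact algebra at the closed point of `K⟦t⟧`. -/
def rOrd (P : Presentation k d S) (D : Fin d → Derivation k S S)
    {K : Type} [Field K] [Algebra k K] (φ : BRing P →ₐ[k] PowerSeries K) : ℝ≥0∞ :=
  reesOrder (tId K) (contactAlg P D φ)

/-- The persistance `ρ_{X,φ}`: the least number of transforms of the contact algebra
(i.e. of point blow-ups directed by `φ`) needed to make the closed point leave the
singular locus, that is, to lower the Nash multiplicity. -/
def rho (P : Presentation k d S) (D : Fin d → Derivation k S S)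
    {K : Type} [Field K] [Algebra k K] (φ : BRing P →ₐ[k] PowerSeries K) : ℕ :=
  persist (tId K) (PowerSeries.X : PowerSeries K) (contactAlg P D φ)


theorem dvr_expand {K R : Type} [Field K] [CommRing R] [IsDomain R] [Algebra K R]
    (ϖ : R) (hϖ0 : ϖ ≠ 0) (hϖu : ¬ IsUnit ϖ)
    (hres : ∀ a : R, ∃ c : K, ϖ ∣ a - algebraMap K R c) :
    ∃ E : R →ₐ[K] PowerSeries K, E ϖ = PowerSeries.X := by
  have hex : ∀ a : R, ∃ c : K, ∃ q : R, a = algebraMap K R c + ϖ * q := by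
    intro a
    obtain ⟨c, q, h⟩ := hres a
    exact ⟨c, q, by rw [← h]; ring⟩
  choose c q hcq using hex
  have huniq : ∀ (a : R) (c' : K) (q' : R), a = algebraMap K R c' + ϖ * q' →
      c a = c' ∧ q a = q' := by
    intro a c' q' h
    have h1 : algebraMap K R (c a - c') = ϖ * (q' - q a) := by
      rw [map_sub]; linear_combination (h - hcq a)
    have h2 : c a - c' = 0 := by
      by_contra hne
      exact hϖu (isUnit_of_dvd_unit ⟨_, h1⟩ ((IsUnit.mk0 _ hne).map (algebraMap K R)))
    refine ⟨sub_eq_zero.mp h2, ?_⟩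
    rw [h2, map_zero] at h1
    rcases mul_eq_zero.mp h1.symm with h3 | h3
    · exact absurd h3 hϖ0
    · exact (sub_eq_zero.mp h3).symm
  have hadd : ∀ a b, c (a + b) = c a + c b ∧ q (a + b) = q a + q b := fun a b =>
    huniq _ _ _ (by rw [map_add]; linear_combination hcq a + hcq b)
  have hmul : ∀ a b, c (a * b) = c a * c b ∧
      q (a * b) = q a * b + algebraMap K R (c a) * q b := fun a b =>
    huniq _ _ _ (by
      rw [map_mul]; linear_combination b * hcq a + algebraMap K R (c a) * hcq b)
  have halg : ∀ x, c (algebraMap K R x) = x ∧ q (algebraMap K R x) = 0 := fun x =>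
    huniq _ _ _ (by simp)
  have hpi : c ϖ = 0 ∧ q ϖ = 1 := huniq _ _ _ (by simp)
  let E : R → PowerSeries K := fun a => PowerSeries.mk fun n => c (q^[n] a)
  have hE : ∀ a, E a = PowerSeries.C (c a) + PowerSeries.X * E (q a) := by
    intro a
    ext n
    cases n with
    | zero => simp [E]
    | succ n =>
      rw [map_add, PowerSeries.coeff_succ_X_mul, PowerSeries.coeff_C]
      simp [E]
  have hEadd : ∀ a b, E (a + b) = E a + E b := by
    intro a b
    ext n
    have : ∀ n, q^[n] (a + b) = q^[n] a + q^[n] b := by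
      intro n
      induction n with
      | zero => rfl
      | succ n ih => rw [Function.iterate_succ_apply', ih, (hadd _ _).2,
          Function.iterate_succ_apply', Function.iterate_succ_apply']
    simp [E, this, (hadd _ _).1]
  have hc0 : c 0 = 0 ∧ q 0 = 0 := by simpa using halg 0
  have hE0 : E 0 = 0 := by simpa using hEadd 0 0
  have hEalg : ∀ x, E (algebraMap K R x) = PowerSeries.C x := by
    intro x
    rw [hE, (halg x).1, (halg x).2, hE0]; simp
  have hEsmul : ∀ x a, E (algebraMap K R x * a) = PowerSeries.C x * E a := by
    intro x a
    ext n
    have : ∀ n, q^[n] (algebraMap K R x * a) = algebraMap K R x * q^[n] a := by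
      intro n
      induction n with
      | zero => rfl
      | succ n ih => rw [Function.iterate_succ_apply', ih, (hmul _ _).2,
          Function.iterate_succ_apply', (halg x).1, (halg x).2]; simp
    simp [E, this, (hmul _ _).1, (halg x).1]
  have hEmul : ∀ a b, E (a * b) = E a * E b := by
    have key : ∀ n, ∀ a b, PowerSeries.coeff n (E (a * b) - E a * E b) = 0 := by
      have step : ∀ a b, E (a * b) - E a * E b =
          PowerSeries.X * (E (q a * b) - E (q a) * E b) := by
        intro a b
        rw [hE (a * b), (hmul a b).1, (hmul a b).2, hEadd, hEsmul, hE a, hE b, map_mul]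
        ring
      intro n
      induction n with
      | zero => intro a b; rw [step]; simp
      | succ n ih => intro a b; rw [step, PowerSeries.coeff_succ_X_mul, ih]
    intro a b
    rw [← sub_eq_zero]
    ext n
    rw [key]; simp
  have hE1 : E 1 = 1 := by simpa using hEalg 1
  refine ⟨{ toFun := E, map_one' := hE1, map_mul' := hEmul, map_zero' := hE0,
            map_add' := hEadd, commutes' := hEalg }, ?_⟩
  show E ϖ = _
  rw [hE, hpi.1, hpi.2, hE1]; simp

theorem res_aux {R : Type} [CommRing R] {r s a d ca cs x y ϖ : R} (has : r * s = a)
    (hx : a - ca = ϖ * x) (hy : s - cs = ϖ * y) (h3 : d * cs = ca) :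
    (r - d) * s = ϖ * (x - d * y) := by
  linear_combination has + hx - d * hy - h3

theorem loc_expand {K A R : Type} [Field K] [CommRing A] [IsDomain A] [CommRing R] [IsDomain R]
    [IsDiscreteValuationRing R] [Algebra A R] (n : Ideal A) [n.IsPrime]
    [IsLocalization.AtPrime R n] (j : K →+* A)
    (hresA : ∀ a : A, ∃ c : K, a - j c ∈ n) (t : A) (ht : t ≠ 0) (htn : t ∈ n) :
    ∃ (E : A →+* PowerSeries K) (e : ℕ) (w : PowerSeries K),
      1 ≤ e ∧ IsUnit w ∧ E t = w * PowerSeries.X ^ e ∧ ∀ c : K, E (j c) = PowerSeries.C c := by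
  obtain ⟨ϖ, hϖ⟩ := IsDiscreteValuationRing.exists_irreducible R
  let f : K →+* R := (algebraMap A R).comp j
  let _ : Algebra K R := f.toAlgebra
  have hmem : ∀ a ∈ n, ϖ ∣ algebraMap A R a := by
    intro a ha
    rw [← Ideal.mem_span_singleton, ← hϖ.maximalIdeal_eq]
    exact (IsLocalization.AtPrime.to_map_mem_maximal_iff R n a).mpr ha
  have hres : ∀ r : R, ∃ c : K, ϖ ∣ r - algebraMap K R c := by
    intro r
    obtain ⟨⟨a, s⟩, has⟩ := IsLocalization.surj n.primeCompl r
    obtain ⟨ca, hca⟩ := hresA a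
    obtain ⟨cs, hcs⟩ := hresA s
    have hcs0 : cs ≠ 0 := by
      rintro rfl
      exact s.2 (by simpa using hcs)
    refine ⟨ca / cs, ?_⟩
    have hu : IsUnit (algebraMap A R s) := IsLocalization.map_units R s
    rw [← hu.dvd_mul_right]
    obtain ⟨x, hx⟩ := hmem _ hca
    obtain ⟨y, hy⟩ := hmem _ hcs
    have hf : ∀ c, algebraMap A R (j c) =
      algebraMap K R c := fun c => rfl
    rw [map_sub, hf] at hx hy
    have h3 : algebraMap K R (ca / cs) * algebraMap K R cs = algebraMap K R ca := by
      rw [← map_mul, div_mul_cancel₀ _ hcs0]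
    refine ⟨x - algebraMap K R (ca / cs) * y, ?_⟩
    simp only at has
    exact res_aux has hx hy h3
  obtain ⟨E, hE⟩ := dvr_expand ϖ hϖ.ne_zero hϖ.not_isUnit hres
  have hX0R : algebraMap A R t ≠ 0 := by
    rw [Ne, map_eq_zero_iff _ (IsLocalization.injective R n.primeCompl_le_nonZeroDivisors)]
    exact ht
  obtain ⟨e, w, hw⟩ := IsDiscreteValuationRing.eq_unit_mul_pow_irreducible hX0R hϖ
  refine ⟨(E : R →+* PowerSeries K).comp (algebraMap A R), e, E w, ?_, w.isUnit.map E, ?_, ?_⟩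
  · rw [Nat.one_le_iff_ne_zero]
    rintro rfl
    have := hmem _ htn
    rw [hw, pow_zero, mul_one] at this
    exact hϖ.not_isUnit (isUnit_of_dvd_unit this w.isUnit)
  · show E (algebraMap A R t) = _
    rw [hw, map_mul, map_pow, hE]
  · intro c
    exact E.commutes c

theorem puiseux_embed (K : Type) [Field K] [IsAlgClosed K] [CharZero K]
    (M : Type) [Field M] [Algebra (PowerSeries K) M]
    [Algebra (FractionRing (PowerSeries K)) M]
    [IsScalarTower (PowerSeries K) (FractionRing (PowerSeries K)) M]
    [FiniteDimensional (FractionRing (PowerSeries K)) M] :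
    ∃ (E : integralClosure (PowerSeries K) M →+* PowerSeries K) (e : ℕ) (w : PowerSeries K),
      1 ≤ e ∧ IsUnit w ∧
      E (algebraMap (PowerSeries K) _ PowerSeries.X) = w * PowerSeries.X ^ e ∧
      ∀ c : K, E (algebraMap (PowerSeries K) _ (PowerSeries.C c)) = PowerSeries.C c := by
  have : CharZero (FractionRing (PowerSeries K)) :=
    charZero_of_injective_algebraMap (R := K)
      ((IsFractionRing.injective (PowerSeries K) (FractionRing (PowerSeries K))).comp
        (PowerSeries.C_injective (R := K)) : Function.Injective
          (((algebraMap (PowerSeries K) (FractionRing (PowerSeries K))).comp PowerSeries.C)))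
  let A := integralClosure (PowerSeries K) M
  have hinjM : Function.Injective (algebraMap (PowerSeries K) M) := by
    rw [IsScalarTower.algebraMap_eq (PowerSeries K) (FractionRing (PowerSeries K)) M]
    exact (algebraMap (FractionRing (PowerSeries K)) M).injective.comp
      (IsFractionRing.injective (PowerSeries K) (FractionRing (PowerSeries K)))
  have hinjA : Function.Injective (algebraMap (PowerSeries K) A) := by
    intro a b h
    exact hinjM (congrArg Subtype.val h)
  have : IsDedekindDomain A :=
    integralClosure.isDedekindDomain (PowerSeries K) (FractionRing (PowerSeries K)) M
  have : Algebra.IsIntegral (PowerSeries K) A := inferInstance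
  obtain ⟨n, hn⟩ := Ideal.exists_maximal A
  have hnp : n.IsPrime := hn.isPrime
  have hcomap : (n.comap (algebraMap (PowerSeries K) A)).IsMaximal :=
    Ideal.isMaximal_comap_of_isIntegral_of_isMaximal n
  have hXn : algebraMap (PowerSeries K) A PowerSeries.X ∈ n := by
    have h1 := IsLocalRing.eq_maximalIdeal hcomap
    have h2 : (PowerSeries.X : PowerSeries K) ∈ IsLocalRing.maximalIdeal (PowerSeries K) := by
      rw [PowerSeries.maximalIdeal_eq_span_X]
      exact Ideal.mem_span_singleton_self _
    rw [← h1] at h2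
    exact h2
  have hX0 : algebraMap (PowerSeries K) A PowerSeries.X ≠ 0 := by
    intro h
    exact PowerSeries.X_ne_zero (hinjA (h.trans (map_zero _).symm))
  have hn0 : n ≠ ⊥ := by
    rintro rfl
    exact hX0 ((Submodule.mem_bot _).mp hXn)
  -- residues
  have hresA : ∀ a : A, ∃ c : K,
      a - algebraMap (PowerSeries K) A (PowerSeries.C c) ∈ n := by
    let _ : Field (A ⧸ n) := Ideal.Quotient.field n
    let g : K →+* A ⧸ n :=
      (Ideal.Quotient.mk n).comp ((algebraMap (PowerSeries K) A).comp PowerSeries.C)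
    let _ : Algebra K (A ⧸ n) := g.toAlgebra
    have hg : (Ideal.Quotient.mk n).comp (algebraMap (PowerSeries K) A) =
        g.comp (PowerSeries.constantCoeff (R := K)) := by
      ext p
      obtain ⟨p', hp'⟩ : (PowerSeries.X : PowerSeries K) ∣
          p - PowerSeries.C (PowerSeries.constantCoeff p) := by
        rw [PowerSeries.X_dvd_iff]; simp
      have : algebraMap (PowerSeries K) A p -
          algebraMap (PowerSeries K) A (PowerSeries.C (PowerSeries.constantCoeff p)) ∈ n := by
        rw [← map_sub, hp', map_mul]
        exact n.mul_mem_right _ hXn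
      exact Ideal.Quotient.eq.mpr this
    have hint : Algebra.IsIntegral K (A ⧸ n) := by
      constructor
      intro x
      obtain ⟨a, rfl⟩ := Ideal.Quotient.mk_surjective x
      obtain ⟨p, hpm, hp⟩ := Algebra.IsIntegral.isIntegral (R := PowerSeries K) a
      refine ⟨p.map PowerSeries.constantCoeff, hpm.map _, ?_⟩
      rw [Polynomial.eval₂_map]
      show Polynomial.eval₂ (g.comp PowerSeries.constantCoeff) _ p = 0
      rw [← hg, ← Polynomial.hom_eval₂, hp, map_zero]
    intro a
    obtain ⟨c, hc⟩ := (IsAlgClosed.algebraMap_bijective_of_isIntegral (k := K)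
      (K := A ⧸ n)).2 (Ideal.Quotient.mk n a)
    exact ⟨c, Ideal.Quotient.eq.mp hc.symm⟩
  have hdvr : IsDiscreteValuationRing (Localization.AtPrime n) :=
    IsLocalization.AtPrime.isDiscreteValuationRing_of_dedekind_domain A hn0 _
  exact loc_expand (R := Localization.AtPrime n) n
    ((algebraMap (PowerSeries K) A).comp PowerSeries.C) hresA _ hX0 hXn

theorem exists_lift_hom {S B L : Type} [CommRing S] [CommRing B] [Field L] [IsAlgClosed L]
    [Algebra S B] [Algebra.IsIntegral S B] (hinj : Function.Injective (algebraMap S B))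
    (f : S →+* L) : ∃ g : B →+* L, g.comp (algebraMap S B) = f := by
  let p : Ideal S := RingHom.ker f
  have hp : p.IsPrime := RingHom.ker_isPrime f
  obtain ⟨Q, -, hQ, hQp⟩ := Ideal.exists_ideal_over_prime_of_isIntegral p (⊥ : Ideal B) (by
    intro x hx
    have : x = 0 := hinj (by simpa using hx)
    rw [this]; exact p.zero_mem)
  let f' : S ⧸ p →+* L := RingHom.kerLift f
  have hf' : Function.Injective f' := RingHom.kerLift_injective f
  let h : S ⧸ p →+* B ⧸ Q := Ideal.quotientMap Q (algebraMap S B) hQp.ge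
  have hh : Function.Injective h := Ideal.quotientMap_injective' hQp.le
  let _ : Algebra (S ⧸ p) L := f'.toAlgebra
  let _ : Algebra (S ⧸ p) (B ⧸ Q) := h.toAlgebra
  have : Module.IsTorsionFree (S ⧸ p) L := by
    rw [Module.isTorsionFree_iff_algebraMap_injective]; exact hf'
  have : Module.IsTorsionFree (S ⧸ p) (B ⧸ Q) := by
    rw [Module.isTorsionFree_iff_algebraMap_injective]; exact hh
  have : Algebra.IsIntegral (S ⧸ p) (B ⧸ Q) := by
    constructor
    intro x
    obtain ⟨b, rfl⟩ := Ideal.Quotient.mk_surjective x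
    obtain ⟨P, hP, hb⟩ := Algebra.IsIntegral.isIntegral (R := S) b
    refine ⟨P.map (Ideal.Quotient.mk p), hP.map _, ?_⟩
    rw [Polynomial.eval₂_map]
    show Polynomial.eval₂ ((Ideal.Quotient.mk Q).comp (algebraMap S B)) _ P = 0
    rw [← Polynomial.hom_eval₂, hb, map_zero]
  let l : B ⧸ Q →ₐ[S ⧸ p] L := IsAlgClosed.lift
  refine ⟨(l : B ⧸ Q →+* L).comp (Ideal.Quotient.mk Q), ?_⟩
  ext s
  exact l.commutes (Ideal.Quotient.mk p s)

theorem exists_arc_lift {S B K : Type} [CommRing S] [CommRing B] [Field K] [IsAlgClosed K]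
    [CharZero K] [Algebra S B] [Module.Finite S B]
    (hinj : Function.Injective (algebraMap S B)) (ψ : S →+* PowerSeries K) :
    ∃ (φ : B →+* PowerSeries K) (ι : PowerSeries K →+* PowerSeries K) (e : ℕ)
      (w : PowerSeries K), 1 ≤ e ∧ IsUnit w ∧ ι PowerSeries.X = w * PowerSeries.X ^ e ∧
      (∀ c : K, ι (PowerSeries.C c) = PowerSeries.C c) ∧
      ∀ s, φ (algebraMap S B s) = ι (ψ s) := by
  let F := FractionRing (PowerSeries K)
  let L := AlgebraicClosure F
  obtain ⟨φ0, hφ0⟩ := exists_lift_hom hinj ((algebraMap (PowerSeries K) L).comp ψ)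
  obtain ⟨T, hT⟩ := Module.Finite.fg_top (R := S) (M := B)
  let M : IntermediateField F L := IntermediateField.adjoin F (φ0 '' (T : Set B))
  have hfin : FiniteDimensional F M := by
    have : Finite (φ0 '' (T : Set B)) := (T.finite_toSet.image φ0)
    exact IntermediateField.finiteDimensional_adjoin
      fun x _ => Algebra.IsIntegral.isIntegral x
  have hmem : ∀ b, φ0 b ∈ M := by
    intro b
    have hb : b ∈ Submodule.span S (T : Set B) := by rw [hT]; trivial
    induction hb using Submodule.span_induction with
    | mem x hx => exact IntermediateField.subset_adjoin F _ ⟨x, hx, rfl⟩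
    | zero => rw [map_zero]; exact M.zero_mem
    | add x y _ _ hx hy => rw [map_add]; exact M.add_mem hx hy
    | smul s x _ hx =>
      rw [Algebra.smul_def, map_mul]
      refine M.mul_mem ?_ hx
      have : φ0 (algebraMap S B s) = algebraMap F L (algebraMap (PowerSeries K) F (ψ s)) := by
        rw [← IsScalarTower.algebraMap_apply]
        exact congrArg (fun h => h s) hφ0
      rw [this]
      exact M.algebraMap_mem _
  let φM : B →+* M := φ0.codRestrict M.toSubfield hmem
  have hcomm : φM.comp (algebraMap S B) = (algebraMap (PowerSeries K) M).comp ψ := by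
    ext s
    exact congrArg (fun h => h s) hφ0
  have hint : ∀ b, φM b ∈ integralClosure (PowerSeries K) M := by
    intro b
    obtain ⟨P, hP, hb⟩ := Algebra.IsIntegral.isIntegral (R := S) b
    refine ⟨P.map ψ, hP.map _, ?_⟩
    rw [Polynomial.eval₂_map, ← hcomm, ← Polynomial.hom_eval₂, hb, map_zero]
  let φA : B →+* integralClosure (PowerSeries K) M :=
    φM.codRestrict (integralClosure (PowerSeries K) M).toSubring hint
  obtain ⟨E, e, w, he, hw, hE, hEC⟩ := puiseux_embed K M
  refine ⟨E.comp φA, E.comp (algebraMap _ _), e, w, he, hw, hE, hEC, ?_⟩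
  intro s
  show E (φA (algebraMap S B s)) = E _
  congr 1
  exact Subtype.ext (congrArg (fun h => h s) hcomm)

theorem mem_tId_pow {K : Type} [Field K] (f : PowerSeries K) (n : ℕ) :
    f ∈ tId K ^ n ↔ (n : ℕ∞) ≤ f.order := by
  rw [tId, Ideal.span_singleton_pow, Ideal.mem_span_singleton, PowerSeries.X_pow_dvd_iff]
  constructor
  · exact fun h => PowerSeries.nat_le_order _ _ h
  · intro h m hm
    exact PowerSeries.coeff_of_lt_order _ (lt_of_lt_of_le (by exact_mod_cast hm) h)

theorem adicOrder_of_order {K : Type} [Field K] (f : PowerSeries K) (n : ℕ)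
    (h : f.order = n) : adicOrder (tId K) f = n := by
  have : {m : ℕ | f ∈ tId K ^ m} = Set.Iic n := by
    ext m
    simp [mem_tId_pow, h]
  rw [adicOrder, this, csSup_Iic]

theorem adicOrder_coe {K : Type} [Field K] (f : PowerSeries K) (hf : f ≠ 0) :
    ((adicOrder (tId K) f : ℕ) : ℕ∞) = f.order := by
  obtain ⟨n, hn⟩ := ENat.ne_top_iff_exists.mp (mt PowerSeries.order_eq_top.mp hf)
  rw [adicOrder_of_order f n hn.symm, hn]

/-- polynomials all of whose coefficients satisfy `ord(p_n) ≥ c * n`. -/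
def slopeAlg {K : Type} [Field K] (c : ℝ≥0∞) :
    Subalgebra (PowerSeries K) (Polynomial (PowerSeries K)) where
  carrier := {p | ∀ n : ℕ, c * n ≤ ((p.coeff n).order : ℝ≥0∞)}
  mul_mem' := by
    intro p q hp hq n
    rw [Polynomial.coeff_mul]
    refine Finset.sum_induction _ (fun f : PowerSeries K => c * n ≤ (f.order : ℝ≥0∞)) ?_ ?_ ?_
    · intro a b ha hb
      refine le_trans (le_min ha hb) ?_
      rw [← ENat.toENNReal_min]
      exact ENat.toENNReal_mono (PowerSeries.min_order_le_order_add a b)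
    · simp
    · intro x hx
      rw [PowerSeries.order_mul, ENat.toENNReal_add]
      have : (n : ℝ≥0∞) = (x.1 : ℝ≥0∞) + x.2 := by
        rw [← Finset.HasAntidiagonal.mem_antidiagonal.mp hx]; push_cast; rfl
      rw [this, mul_add]
      exact add_le_add (hp _) (hq _)
  add_mem' := by
    intro p q hp hq n
    rw [Polynomial.coeff_add]
    refine le_trans (le_min (hp n) (hq n)) ?_
    rw [← ENat.toENNReal_min]
    exact ENat.toENNReal_mono (PowerSeries.min_order_le_order_add _ _)
  algebraMap_mem' := by
    intro r n
    rw [Polynomial.algebraMap_apply, Polynomial.coeff_C]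
    split_ifs with h
    · simp [h]
    · simp

theorem reesOrder_arcImage {R K : Type} [CommRing R] [Field K] (ψ : R → PowerSeries K)
    (G : Subalgebra R (Polynomial R)) :
    reesOrder (tId K) (arcImage ψ G) =
      ⨅ x : {x : R × ℕ // (C x.1 * X ^ x.2 : Polynomial R) ∈ G ∧ ψ x.1 ≠ 0 ∧ 1 ≤ x.2},
        ((adicOrder (tId K) (ψ x.1.1) : ℕ) : ℝ≥0∞) / (x.1.2 : ℝ≥0∞) := by
  apply le_antisymm
  · refine le_iInf ?_
    rintro ⟨⟨g, l⟩, hg, hψ, hl⟩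
    exact sInf_le ⟨ψ g, l, hψ, hl, Algebra.subset_adjoin ⟨g, l, hg, hψ, rfl⟩, rfl⟩
  · refine le_sInf ?_
    rintro _ ⟨f, n, hf, hn, hmem, rfl⟩
    set c := ⨅ x : {x : R × ℕ // (C x.1 * X ^ x.2 : Polynomial R) ∈ G ∧ ψ x.1 ≠ 0 ∧ 1 ≤ x.2},
        ((adicOrder (tId K) (ψ x.1.1) : ℕ) : ℝ≥0∞) / (x.1.2 : ℝ≥0∞) with hc
    have hle : arcImage ψ G ≤ slopeAlg c := by
      refine Algebra.adjoin_le ?_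
      rintro _ ⟨g, l, hg, hψ, rfl⟩ m
      rw [Polynomial.coeff_C_mul_X_pow]
      split_ifs with h
      · subst h
        rcases Nat.eq_zero_or_pos m with h0 | h0
        · subst h0; simp
        · have h1 : c ≤ ((adicOrder (tId K) (ψ g) : ℕ) : ℝ≥0∞) / (m : ℝ≥0∞) :=
            iInf_le _ (⟨(g, m), hg, hψ, h0⟩ : {x : R × ℕ // (C x.1 * X ^ x.2 : Polynomial R) ∈ G ∧
              ψ x.1 ≠ 0 ∧ 1 ≤ x.2})
          rw [← adicOrder_coe _ hψ, ENat.toENNReal_coe]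
          exact ENNReal.mul_le_of_le_div h1
      · simp
    have h2 := hle hmem n
    rw [Polynomial.coeff_C_mul_X_pow, if_pos rfl, ← adicOrder_coe _ hf, ENat.toENNReal_coe] at h2
    rw [ENNReal.le_div_iff_mul_le (Or.inl (by exact_mod_cast (by omega : n ≠ 0)))
      (Or.inl (ENNReal.natCast_ne_top n))]
    exact h2

theorem reesOrder_scale {R K K' : Type} [CommRing R] [Field K] [Field K']
    (ψ : R → PowerSeries K) (φ : R → PowerSeries K') (G : Subalgebra R (Polynomial R))
    (e : ℕ) (he : 1 ≤ e) (h0 : ∀ s, φ s = 0 ↔ ψ s = 0)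
    (ho : ∀ s, ψ s ≠ 0 → adicOrder (tId K') (φ s) = e * adicOrder (tId K) (ψ s)) :
    reesOrder (tId K') (arcImage φ G) = e * reesOrder (tId K) (arcImage ψ G) := by
  have he0 : (e : ℝ≥0∞) ≠ 0 := by exact_mod_cast (by omega : e ≠ 0)
  rw [reesOrder_arcImage, reesOrder_arcImage,
    ENNReal.mul_iInf_of_ne he0 (ENNReal.natCast_ne_top e)]
  apply le_antisymm
  · refine le_iInf ?_
    rintro ⟨⟨g, l⟩, hg, hψ, hl⟩
    refine (iInf_le _ ⟨(g, l), hg, (h0 g).not.mpr hψ, hl⟩).trans ?_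
    simp only
    rw [ho g hψ, Nat.cast_mul, mul_div_assoc]
  · refine le_iInf ?_
    rintro ⟨⟨g, l⟩, hg, hφ, hl⟩
    have hψ := (h0 g).not.mp hφ
    refine (iInf_le _ ⟨(g, l), hg, hψ, hl⟩).trans ?_
    simp only
    rw [ho g hψ, Nat.cast_mul, mul_div_assoc]

theorem order_of_isUnit {K : Type} [Field K] {v : PowerSeries K} (hv : IsUnit v) :
    v.order = 0 := by
  by_contra h
  have := PowerSeries.order_ne_zero_iff_constCoeff_eq_zero.mp h
  exact ((hv.map PowerSeries.constantCoeff).ne_zero) this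

theorem order_iota {K K' : Type} [Field K] [Field K'] (ι : PowerSeries K →+* PowerSeries K')
    (e : ℕ) (w : PowerSeries K') (hw : IsUnit w)
    (hι : ι PowerSeries.X = w * PowerSeries.X ^ e) (f : PowerSeries K) (hf : f ≠ 0) :
    ι f ≠ 0 ∧ adicOrder (tId K') (ι f) = e * adicOrder (tId K) f := by
  obtain ⟨n, v, hv⟩ := IsDiscreteValuationRing.eq_unit_mul_pow_irreducible hf
    (PowerSeries.X_prime (R := K)).irreducible
  have h1 : f.order = n := by
    rw [hv, PowerSeries.order_mul, order_of_isUnit v.isUnit, PowerSeries.order_X_pow, zero_add]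
  have h2 : (ι f).order = (e * n : ℕ) := by
    rw [hv, map_mul, map_pow, hι, mul_pow, ← pow_mul, PowerSeries.order_mul,
      PowerSeries.order_mul, order_of_isUnit (v.isUnit.map ι), order_of_isUnit (hw.pow n),
      PowerSeries.order_X_pow, zero_add, zero_add]
  refine ⟨?_, by rw [adicOrder_of_order _ _ h1, adicOrder_of_order _ _ h2]⟩
  intro h
  rw [h, PowerSeries.order_zero] at h2
  exact ENat.natCast_ne_top _ h2.symm

theorem mPoly_le {k : Type} [Field k] {d : ℕ} :
    mPoly k d ≤ Ideal.span (Set.range (MvPolynomial.X : Fin d → MvPolynomial (Fin d) k)) := by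
  intro p hp
  have h0 : MvPolynomial.constantCoeff p = 0 := by
    have : MvPolynomial.aeval (fun _ => (0 : k)) p = 0 := hp
    simpa [MvPolynomial.aeval_def, MvPolynomial.eval₂_zero_apply] using this
  rw [← Set.image_univ, MvPolynomial.mem_ideal_span_X_image]
  intro m hm
  by_contra hcon
  push Not at hcon
  have : m = 0 := by ext i; simpa using hcon i
  rw [this, MvPolynomial.mem_support_iff] at hm
  exact hm h0

theorem mS_map_le {k : Type} [Field k] {d : ℕ} {S : Type} [CommRing S]
    [Algebra (MvPolynomial (Fin d) k) S] {A : Type} [CommRing A] (f : S →+* A) (J : Ideal A)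
    (h : ∀ j, f (zvar k d S j) ∈ J) : ∀ s ∈ mS k d S, f s ∈ J := by
  have h1 : mS k d S ≤ J.comap f := by
    rw [mS, Ideal.map_le_iff_le_comap]
    refine mPoly_le.trans ?_
    rw [Ideal.span_le]
    rintro _ ⟨j, rfl⟩
    exact h j
  exact h1

theorem zvar_mem {k : Type} [Field k] {d : ℕ} {S : Type} [CommRing S]
    [Algebra (MvPolynomial (Fin d) k) S] (j : Fin d) : zvar k d S j ∈ mS k d S := by
  refine Ideal.mem_map_of_mem _ ?_
  show MvPolynomial.aeval (fun _ => (0 : k)) (MvPolynomial.X j : MvPolynomial (Fin d) k) = 0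
  simp

/-- (Lemma `lemma:lifting_arcs`.)  Let `ψ̄ : S → K⟦t⟧` be a diagonal arc
(`ψ̄(z_j) = u_j t^α` with `u_j` units, `α ≥ 1`) which is diagonal-generic for the
elimination algebra `G_X^{(d)}`, i.e. `ord(ψ̄(G_X^{(d)})) = α · ord(G_X^{(d)})`.  Then
there are a field extension `K' ⊇ k` and a (nonzero) `k`-algebra homomorphism
`φ : B → K'⟦t⟧`, sending the maximal ideal of `B` into `(t)`, whose restriction
`φ^{(d)}` to `S` has the same kernel as `ψ̄`; moreover `φ^{(d)}` is again diagonal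
(`φ^{(d)}(z_j) = u'_j g'(t)` for units `u'_j` and a common `g'` of positive order) and is
diagonal-generic for `G_X^{(d)}`: `ord(φ^{(d)}(G_X^{(d)})) = ord(φ^{(d)}) · ord(G_X^{(d)})`. -/
theorem lift_of_diagonal_generic_arc
    (k : Type) [Field k] [CharZero k] (d : ℕ) (hd : 1 ≤ d)
    (S : Type) [CommRing S] [IsDomain S] [Algebra (MvPolynomial (Fin d) k) S]
    [Algebra k S] [IsScalarTower k (MvPolynomial (Fin d) k) S] [IsSLoc k d S]
    (D : Fin d → Derivation k S S)
    (hD : ∀ i j : Fin d, D j (zvar k d S i) = if i = j then 1 else 0)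
    (P : Presentation k d S)
    (K : Type) [Field K] [Algebra k K]
    (ψ : S →ₐ[k] PowerSeries K)
    (u : Fin d → PowerSeries K) (hu : ∀ j, IsUnit (u j))
    (α : ℕ) (hα : 1 ≤ α)
    (hψz : ∀ j, ψ (zvar k d S j) = u j * PowerSeries.X ^ α)
    (hgen : reesOrder (tId K) (arcImage (⇑ψ) (elimAlg P D)) =
      (α : ℝ≥0∞) * reesOrder (mS k d S) (elimAlg P D)) :
    ∃ (K' : Type) (_ : Field K') (_ : Algebra k K')
      (φ : BRing P →ₐ[k] PowerSeries K'),
      (∀ s ∈ mS k d S, φ (algebraMap S (BRing P) s) ∈ tId K') ∧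
      (∀ i, φ (theta P i) ∈ tId K') ∧
      (∀ s : S, φ (algebraMap S (BRing P) s) = 0 ↔ ψ s = 0) ∧
      (∃ (g' : PowerSeries K') (u' : Fin d → PowerSeries K'),
        g' ≠ 0 ∧ 1 ≤ tOrd g' ∧ (∀ j, IsUnit (u' j)) ∧
        ∀ j, φ (algebraMap S (BRing P) (zvar k d S j)) = u' j * g') ∧
      reesOrder (tId K')
          (arcImage (fun s : S => φ (algebraMap S (BRing P) s)) (elimAlg P D)) =
        (homOrd (mS k d S) (tId K')
            (fun s : S => φ (algebraMap S (BRing P) s)) : ℝ≥0∞) *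
          reesOrder (mS k d S) (elimAlg P D) := by
  let K' := AlgebraicClosure K
  have hchK : CharZero K := charZero_of_injective_algebraMap (algebraMap k K).injective
  have hchK' : CharZero K' := charZero_of_injective_algebraMap (algebraMap K K').injective
  have hfin := P.hfinite
  let mp : PowerSeries K →+* PowerSeries K' := PowerSeries.map (algebraMap K K')
  obtain ⟨φ, ι, e, w, he, hw, hιX, hιC, hφ⟩ :=
    exists_arc_lift (S := S) (B := BRing P) (K := K') P.hinj (mp.comp (ψ : S →+* PowerSeries K))
  let κ : PowerSeries K →+* PowerSeries K' := ι.comp mp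
  have hκX : κ PowerSeries.X = w * PowerSeries.X ^ e := by
    show ι (PowerSeries.map (algebraMap K K') PowerSeries.X) = _
    rw [PowerSeries.map_X, hιX]
  have hφκ : ∀ s, φ (algebraMap S (BRing P) s) = κ (ψ s) := hφ
  have hκ := order_iota κ e w hw hκX
  have hzero : ∀ s : S, φ (algebraMap S (BRing P) s) = 0 ↔ ψ s = 0 := by
    intro s
    rw [hφκ]
    constructor
    · intro h
      by_contra h'
      exact (hκ _ h').1 h
    · intro h; rw [h, map_zero]
  have hz : ∀ j, φ (algebraMap S (BRing P) (zvar k d S j)) = κ (u j) * κ PowerSeries.X ^ α := by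
    intro j
    rw [hφκ, hψz, map_mul, map_pow]
  have hzo : ∀ j, (φ (algebraMap S (BRing P) (zvar k d S j))).order = (e * α : ℕ) := by
    intro j
    rw [hz, hκX, mul_pow, ← pow_mul, PowerSeries.order_mul, PowerSeries.order_mul,
      order_of_isUnit ((hu j).map κ), order_of_isUnit (hw.pow α), PowerSeries.order_X_pow,
      zero_add, zero_add]
  have hord : ∀ n : ℕ, (∀ s ∈ mS k d S, φ (algebraMap S (BRing P) s) ∈ tId K' ^ n) ↔
      n ≤ e * α := by
    intro n
    constructor
    · intro h
      have h1 := h _ (zvar_mem ⟨0, hd⟩)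
      rw [mem_tId_pow, hzo] at h1
      exact_mod_cast h1
    · intro h
      refine mS_map_le (φ.comp (algebraMap S (BRing P))) (tId K' ^ n) ?_
      intro j
      show φ (algebraMap S (BRing P) (zvar k d S j)) ∈ _
      rw [mem_tId_pow, hzo]
      exact_mod_cast h
  have heα : 1 ≤ e * α := Nat.mul_pos he hα
  have hm : ∀ s ∈ mS k d S, φ (algebraMap S (BRing P) s) ∈ tId K' := by
    have := (hord 1).mpr heα
    simpa using this
  have hprime : (tId K').IsPrime := PowerSeries.span_X_isPrime
  have hθ : ∀ i, φ (theta P i) ∈ tId K' := by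
    intro i
    have h1 := congrArg φ (P.hroot i)
    rw [map_zero, minPolyOf, map_add, map_pow, Polynomial.aeval_X, map_sum, map_add, map_pow,
      map_sum] at h1
    refine hprime.mem_of_pow_mem (P.b i) ?_
    have h2 : φ (theta P i) ^ P.b i = -∑ j ∈ Finset.range (P.b i - 1),
        φ (Polynomial.aeval (Ideal.Quotient.mk P.I (MvPolynomial.X i))
          (Polynomial.C (P.Bc i j) * Polynomial.X ^ j)) := eq_neg_of_add_eq_zero_left h1
    rw [h2]
    refine (tId K').neg_mem ((tId K').sum_mem ?_)
    intro j hj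
    rw [Finset.mem_range] at hj
    rw [map_mul, map_mul, Polynomial.aeval_C]
    refine (tId K').mul_mem_right _ (hm _ ?_)
    have hb := P.hb i
    exact Ideal.pow_le_self (by omega) (P.hmem i j (by omega))
  have hcomm : ∀ c : k, φ (algebraMap k (BRing P) c) = algebraMap k (PowerSeries K') c := by
    intro c
    rw [IsScalarTower.algebraMap_apply k S (BRing P), hφκ, AlgHom.commutes]
    show ι (PowerSeries.map (algebraMap K K') (algebraMap k (PowerSeries K) c)) = _
    rw [PowerSeries.algebraMap_apply, PowerSeries.algebraMap_apply, PowerSeries.map_C, hιC,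
      ← IsScalarTower.algebraMap_apply]
  let φ' : BRing P →ₐ[k] PowerSeries K' := { φ with commutes' := hcomm }
  refine ⟨K', inferInstance, inferInstance, φ', hm, hθ, hzero, ?_, ?_⟩
  · refine ⟨κ PowerSeries.X ^ α, fun j => κ (u j), ?_, ?_, fun j => (hu j).map κ, hz⟩
    · exact pow_ne_zero _ (hκ _ PowerSeries.X_ne_zero).1
    · rw [tOrd, ← map_pow, (hκ _ (pow_ne_zero _ PowerSeries.X_ne_zero)).2,
        adicOrder_of_order _ _ (PowerSeries.order_X_pow α)]
      exact heα
  · have hh : homOrd (mS k d S) (tId K') (fun s : S => φ' (algebraMap S (BRing P) s)) = e * α := by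
      have : {n : ℕ | ∀ s ∈ mS k d S, φ' (algebraMap S (BRing P) s) ∈ tId K' ^ n} =
          Set.Iic (e * α) := by
        ext n
        exact hord n
      rw [homOrd, this, csSup_Iic]
    rw [hh, reesOrder_scale (⇑ψ) (fun s : S => φ' (algebraMap S (BRing P) s))
      (elimAlg P D) e he hzero, hgen]
    · push_cast; ring
    · intro s hs
      show adicOrder _ (φ (algebraMap S (BRing P) s)) = _
      rw [hφκ]
      exact (hκ _ hs).2

end NashMult
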